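/- Let r ∈ ℤ_{≥0} and λ > −1/2. The image of S_r(ℝ) under the transform F_r^λ equals S_r(ℝ): every g ∈ S_r(ℝ) satisfies F_r^λ(g) ∈ S_r(ℝ), and every h ∈ S_r(ℝ) equals F_r^λ(g) for some g ∈ S_r(ℝ). -/

import Mathlib

open Real MeasureTheory Finset

/-- Normalized Bessel function j_lambda(v). -/
noncomputable def nbessel (l v : ℝ) : ℝ :=
  Real.Gamma (l + 1) *
    ∑' k : ℕ, (-1 : ℝ) ^ k / (Nat.factorial k * Real.Gamma (k + l + 1)) * (v / 2) ^ (2 * k)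

/-- Pochhammer symbol (z)_n = z(z+1)...(z+n-1), with (z)_0 = 1. -/
noncomputable def poch (z : ℝ) (n : ℕ) : ℝ := ∏ i ∈ Finset.range n, (z + i)

/-- The kernel e_{2r+1}(v, lambda). -/
noncomputable def e2r1 (r : ℕ) (l : ℝ) (v : ℝ) : ℂ :=
  (nbessel l v : ℂ) + Complex.I * (-1 : ℂ) ^ (r + 1) *
    ((v ^ (2 * r + 1) / (2 ^ (2 * r + 1) * poch (l + 1) (2 * r + 1)) : ℝ) : ℂ) *
    (nbessel (l + (2 * r + 1)) v : ℂ)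

/-- The non-deformed transform F_r^lambda applied to a function g : ℝ → ℂ. -/
noncomputable def Ftrans (r : ℕ) (l : ℝ) (g : ℝ → ℂ) (v : ℝ) : ℂ :=
  ((1 / (2 ^ (l + 1) * Real.Gamma (l + 1)) : ℝ) : ℂ) *
    ∫ u : ℝ, e2r1 r l (u * v) * g u * ((|u| ^ (2 * l + 1) : ℝ) : ℂ)

/-- g belongs to S_n(ℝ): a Schwartz function whose odd derivatives of order
2s+1 for s < n vanish at the origin. -/
def InSn (n : ℕ) (g : SchwartzMap ℝ ℂ) : Prop :=
  ∀ s : ℕ, s < n → iteratedDeriv (2 * s + 1) (⇑g) 0 = 0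

open scoped ContDiff

/-- The function underlies some Schwartz map. -/
def IsSchwartz (f : ℝ → ℂ) : Prop := ∃ g : SchwartzMap ℝ ℂ, ⇑g = f

/-- Decay faster than every power. -/
def RapidDecay (f : ℝ → ℂ) : Prop := ∀ k : ℕ, ∃ C : ℝ, ∀ x : ℝ, |x| ^ k * ‖f x‖ ≤ C

theorem iteratedDeriv_mem_of_closed {A : Set (ℝ → ℂ)}
    (hA : ∀ f ∈ A, ∃ g ∈ A, ∀ x, HasDerivAt f (g x) x) (n : ℕ) :
    ∀ f ∈ A, iteratedDeriv n f ∈ A := by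
  induction n with
  | zero => intro f hf; simpa using hf
  | succ n ih =>
    intro f hf
    obtain ⟨g, hg, hfg⟩ := hA f hf
    rw [iteratedDeriv_succ', show deriv f = g from funext fun x => (hfg x).deriv]
    exact ih g hg

theorem contDiff_of_closed {A : Set (ℝ → ℂ)}
    (hA : ∀ f ∈ A, ∃ g ∈ A, ∀ x, HasDerivAt f (g x) x) {f : ℝ → ℂ} (hf : f ∈ A) :
    ContDiff ℝ ∞ f := by
  refine contDiff_infty_iff_deriv.2 ⟨fun x => ?_, ?_⟩
  · obtain ⟨g, -, hfg⟩ := hA f hf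
    exact (hfg x).differentiableAt
  · refine contDiff_of_differentiable_iteratedDeriv fun m _ x => ?_
    rw [← iteratedDeriv_succ']
    obtain ⟨g, -, hfg⟩ := hA _ (iteratedDeriv_mem_of_closed hA (m + 1) f hf)
    exact (hfg x).differentiableAt

theorem isSchwartz_of_closed {A : Set (ℝ → ℂ)}
    (hA : ∀ f ∈ A, ∃ g ∈ A, ∀ x, HasDerivAt f (g x) x) (hd : ∀ f ∈ A, RapidDecay f)
    {f : ℝ → ℂ} (hf : f ∈ A) : IsSchwartz f := by
  refine ⟨⟨f, contDiff_of_closed hA hf, fun k n => ?_⟩, rfl⟩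
  obtain ⟨C, hC⟩ := hd _ (iteratedDeriv_mem_of_closed hA n f hf) k
  refine ⟨C, fun x => ?_⟩
  rw [norm_iteratedFDeriv_eq_norm_iteratedDeriv, Real.norm_eq_abs]
  exact hC x

namespace IsSchwartz

variable {f g : ℝ → ℂ}

protected theorem contDiff (hf : IsSchwartz f) : ContDiff ℝ ∞ f := by
  obtain ⟨g, rfl⟩ := hf
  exact g.smooth ⊤

protected theorem continuous (hf : IsSchwartz f) : Continuous f := hf.contDiff.continuous

protected theorem differentiable (hf : IsSchwartz f) : Differentiable ℝ f :=
  hf.contDiff.differentiable (by simp)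

theorem rapidDecay (hf : IsSchwartz f) : RapidDecay f := by
  obtain ⟨g, rfl⟩ := hf
  intro k
  obtain ⟨C, hC⟩ := g.decay' k 0
  exact ⟨C, fun x => by simpa using! hC x⟩

protected theorem add (hf : IsSchwartz f) (hg : IsSchwartz g) : IsSchwartz fun x => f x + g x := by
  obtain ⟨f, rfl⟩ := hf
  obtain ⟨g, rfl⟩ := hg
  exact ⟨f + g, rfl⟩

theorem const_mul (c : ℂ) (hf : IsSchwartz f) : IsSchwartz fun x => c * f x := by
  obtain ⟨f, rfl⟩ := hf
  exact ⟨c • f, rfl⟩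

protected theorem sub (hf : IsSchwartz f) (hg : IsSchwartz g) : IsSchwartz fun x => f x - g x := by
  obtain ⟨f, rfl⟩ := hf
  obtain ⟨g, rfl⟩ := hg
  exact ⟨f - g, rfl⟩

protected theorem deriv (hf : IsSchwartz f) : IsSchwartz (deriv f) := by
  obtain ⟨f, rfl⟩ := hf
  exact ⟨SchwartzMap.derivCLM ℂ ℂ f, funext fun x => SchwartzMap.derivCLM_apply ..⟩

theorem comp_neg (hf : IsSchwartz f) : IsSchwartz fun x => f (-x) := by
  obtain ⟨f, rfl⟩ := hf
  exact ⟨SchwartzMap.compCLMOfContinuousLinearEquiv ℂ (ContinuousLinearEquiv.neg ℝ) f, rfl⟩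

theorem id_mul (hf : IsSchwartz f) : IsSchwartz fun x => (x : ℂ) * f x := by
  obtain ⟨f, rfl⟩ := hf
  refine ⟨SchwartzMap.smulLeftCLM ℂ (fun x : ℝ => x) f, funext fun x => ?_⟩
  rw [SchwartzMap.smulLeftCLM_apply_apply (by fun_prop)]
  simp

theorem pow_mul (n : ℕ) (hf : IsSchwartz f) : IsSchwartz fun x => (x : ℂ) ^ n * f x := by
  induction n with
  | zero => simpa using hf
  | succ n ih =>
    convert ih.id_mul using 2
    ring

theorem sub_mul (a : ℝ) (hf : IsSchwartz f) : IsSchwartz fun x => ((x : ℂ) - a) * f x := by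
  convert hf.id_mul.sub (hf.const_mul a) using 2
  ring

end IsSchwartz

theorem rapidDecay_of_sub_pow_mul {f : ℝ → ℂ} (a : ℝ) (n : ℕ) (hf : Continuous f)
    (h : RapidDecay fun x => ((x : ℂ) - a) ^ n * f x) : RapidDecay f := by
  intro k
  obtain ⟨C, hC⟩ := h k
  obtain ⟨B, hB⟩ := (isCompact_Icc (a := a - 1) (b := a + 1)).exists_bound_of_continuousOn
    (f := fun x : ℝ => (|x| ^ k : ℝ) * ‖f x‖) (by fun_prop)
  refine ⟨max B C, fun x => ?_⟩
  by_cases hx : |x - a| ≤ 1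
  · refine le_max_of_le_left (le_trans (le_abs_self _) (hB x ?_))
    rw [abs_le] at hx
    constructor <;> linarith
  · refine le_max_of_le_right (le_trans ?_ (hC x))
    have h1 : (1 : ℝ) ≤ ‖((x : ℂ) - a) ^ n‖ := by
      rw [norm_pow, ← Complex.ofReal_sub, Complex.norm_real, Real.norm_eq_abs]
      exact one_le_pow₀ (not_le.1 hx).le
    rw [norm_mul]
    have := mul_le_mul_of_nonneg_right h1 (norm_nonneg (f x))
    gcongr
    linarith

theorem isSchwartz_of_sub_pow_mul {f : ℝ → ℂ} (a : ℝ) (n : ℕ) (hf : ContDiff ℝ ∞ f)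
    (h : IsSchwartz fun x => ((x : ℂ) - a) ^ n * f x) : IsSchwartz f := by
  refine isSchwartz_of_closed
    (A := {f | ContDiff ℝ ∞ f ∧ ∃ n : ℕ, IsSchwartz fun x => ((x : ℂ) - a) ^ n * f x}) ?_ ?_
    ⟨hf, n, h⟩
  · rintro f ⟨hf, n, h⟩
    have hd : Differentiable ℝ f := hf.differentiable (by simp)
    refine ⟨deriv f, ⟨(contDiff_infty_iff_deriv.1 hf).2, n + 1, ?_⟩, fun x => (hd x).hasDerivAt⟩
    convert (h.deriv.sub_mul a).sub (h.const_mul n) using 2 with x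
    have h1 : HasDerivAt (fun x : ℝ => ((x : ℂ) - a)) 1 x :=
      ((hasDerivAt_id x).ofReal_comp).sub_const _
    have h2 := ((h1.pow n).mul (hd x).hasDerivAt).deriv
    simp only [Pi.pow_def, Pi.mul_def] at h2
    rw [h2]
    rcases n with _ | n
    · simp
    · rw [Nat.add_sub_cancel]
      ring
  · rintro f ⟨hf, n, h⟩
    exact rapidDecay_of_sub_pow_mul a n hf.continuous h.rapidDecay

theorem hasDerivAt_integral_pow_mul_comp {f : ℝ → ℂ} (hf : ContDiff ℝ ∞ f) (a : ℝ) (n : ℕ)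
    (x : ℝ) :
    HasDerivAt (fun x => ∫ t in (0 : ℝ)..1, (t : ℂ) ^ n * f (a + t * (x - a)))
      (∫ t in (0 : ℝ)..1, (t : ℂ) ^ (n + 1) * deriv f (a + t * (x - a))) x := by
  have hd : Differentiable ℝ f := hf.differentiable (by simp)
  have hf' : Continuous (deriv f) := (contDiff_infty_iff_deriv.1 hf).2.continuous
  have hfc := hf.continuous
  obtain ⟨B, hB⟩ := ((isCompact_Icc (a := (0 : ℝ)) (b := 1)).prod
    (isCompact_Icc (a := x - 1) (b := x + 1))).exists_bound_of_continuousOn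
    (f := fun p : ℝ × ℝ => (p.1 : ℂ) ^ (n + 1) * deriv f (a + p.1 * (p.2 - a))) (by fun_prop)
  refine (intervalIntegral.hasDerivAt_integral_of_dominated_loc_of_deriv_le
    (F' := fun x t => (t : ℂ) ^ (n + 1) * deriv f (a + t * (x - a))) (bound := fun _ => B)
    (Icc_mem_nhds (by linarith : x - 1 < x) (by linarith : x < x + 1))
    (Filter.Eventually.of_forall fun y => ?_) ?_ ?_ ?_ ?_ ?_).2
  · exact Continuous.aestronglyMeasurable (by fun_prop)
  · exact Continuous.intervalIntegrable (by fun_prop) _ _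
  · exact Continuous.aestronglyMeasurable (by fun_prop)
  · refine Filter.Eventually.of_forall fun t ht y hy => hB (t, y) ⟨?_, hy⟩
    rw [Set.uIoc_of_le zero_le_one] at ht
    exact ⟨ht.1.le, ht.2⟩
  · exact intervalIntegrable_const
  · refine Filter.Eventually.of_forall fun t _ y _ => ?_
    have h1 : HasDerivAt (fun y : ℝ => a + t * (y - a)) t y := by
      simpa using (((hasDerivAt_id y).sub_const a).const_mul t).const_add a
    have h2 := ((hd (a + t * (y - a))).hasDerivAt.scomp y h1).const_mul ((t : ℂ) ^ n)
    refine h2.congr_deriv ?_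
    rw [Complex.real_smul]
    ring

/-- A smooth function vanishing at `a` is a smooth multiple of `x - a`. -/
theorem exists_contDiff_sub_mul {f : ℝ → ℂ} (hf : ContDiff ℝ ∞ f) {a : ℝ} (ha : f a = 0) :
    ∃ g : ℝ → ℂ, ContDiff ℝ ∞ g ∧ ∀ x : ℝ, f x = ((x : ℂ) - a) * g x := by
  have hf' := (contDiff_infty_iff_deriv.1 hf).2
  have hd : Differentiable ℝ f := hf.differentiable (by simp)
  refine ⟨fun x => ∫ t in (0 : ℝ)..1, (t : ℂ) ^ 0 * deriv f (a + t * (x - a)), ?_, fun x => ?_⟩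
  · refine contDiff_of_closed (A := {F | ∃ (n : ℕ) (φ : ℝ → ℂ), ContDiff ℝ ∞ φ ∧
      F = fun x => ∫ t in (0 : ℝ)..1, (t : ℂ) ^ n * φ (a + t * (x - a))}) ?_ ⟨0, _, hf', rfl⟩
    rintro F ⟨n, φ, hφ, rfl⟩
    exact ⟨_, ⟨n + 1, _, (contDiff_infty_iff_deriv.1 hφ).2, rfl⟩,
      hasDerivAt_integral_pow_mul_comp hφ a n⟩
  · have h1 (t : ℝ) : HasDerivAt (fun t : ℝ => f (a + t * (x - a)))
        (((x : ℂ) - a) * ((t : ℂ) ^ 0 * deriv f (a + t * (x - a)))) t := by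
      have h1 : HasDerivAt (fun t : ℝ => a + t * (x - a)) (x - a) t := by
        simpa using ((hasDerivAt_id t).mul_const (x - a)).const_add a
      refine ((hd (a + t * (x - a))).hasDerivAt.scomp t h1).congr_deriv ?_
      simp
    have hc : Continuous (deriv f) := hf'.continuous
    have := intervalIntegral.integral_eq_sub_of_hasDerivAt (a := 0) (b := 1)
      (fun t _ => h1 t) (Continuous.intervalIntegrable (by fun_prop) _ _)
    rw [intervalIntegral.integral_const_mul] at this
    simp only [this]
    simp [ha]

/-- A Schwartz function vanishing at `a` is `x - a` times a Schwartz function. -/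
theorem IsSchwartz.exists_sub_mul {f : ℝ → ℂ} (hf : IsSchwartz f) {a : ℝ} (ha : f a = 0) :
    ∃ g : ℝ → ℂ, IsSchwartz g ∧ ∀ x : ℝ, f x = ((x : ℂ) - a) * g x := by
  obtain ⟨g, hg, hfg⟩ := exists_contDiff_sub_mul hf.contDiff ha
  refine ⟨g, isSchwartz_of_sub_pow_mul a 1 hg ?_, hfg⟩
  convert hf using 2 with x
  rw [hfg x, pow_one]

/-- A family stable under `x⁻¹ d/dx` up to sign, with rapid decay, consists of Schwartz
functions. -/
theorem isSchwartz_of_hasDerivAt_neg_mul {G : ℕ → ℝ → ℂ}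
    (hG : ∀ n (x : ℝ), HasDerivAt (G n) (-(x : ℂ) * G (n + 1) x) x) (hd : ∀ n, RapidDecay (G n)) :
    IsSchwartz (G 0) := by
  let S : Set (ℝ → ℂ) := {F | ∃ k n : ℕ, F = fun x : ℝ => (x : ℂ) ^ k * G n x}
  refine isSchwartz_of_closed (A := (Submodule.span ℂ S : Set (ℝ → ℂ))) ?_ ?_
    (Submodule.subset_span ⟨0, 0, by simp⟩)
  · intro f hf
    induction hf using Submodule.span_induction with
    | mem f hf =>
      obtain ⟨k, n, rfl⟩ := hf
      refine ⟨(k : ℂ) • (fun x : ℝ => (x : ℂ) ^ (k - 1) * G n x) -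
        (fun x : ℝ => (x : ℂ) ^ (k + 1) * G (n + 1) x),
        Submodule.sub_mem _ (Submodule.smul_mem _ _ (Submodule.subset_span ⟨_, _, rfl⟩))
          (Submodule.subset_span ⟨_, _, rfl⟩), fun x => ?_⟩
      refine ((((hasDerivAt_id x).ofReal_comp).pow k).mul (hG n x)).congr_deriv ?_
      simp only [Pi.sub_apply, Pi.smul_apply, smul_eq_mul, Pi.pow_apply, id]
      push_cast
      ring
    | zero => exact ⟨0, Submodule.zero_mem _, fun x => hasDerivAt_const x 0⟩
    | add f g _ _ hf hg =>
      obtain ⟨f', hf', hf⟩ := hf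
      obtain ⟨g', hg', hg⟩ := hg
      exact ⟨f' + g', Submodule.add_mem _ hf' hg', fun x => (hf x).add (hg x)⟩
    | smul c f _ hf =>
      obtain ⟨f', hf', hf⟩ := hf
      exact ⟨c • f', Submodule.smul_mem _ c hf', fun x => (hf x).const_smul c⟩
  · intro f hf
    induction hf using Submodule.span_induction with
    | mem f hf =>
      obtain ⟨k, n, rfl⟩ := hf
      intro j
      obtain ⟨C, hC⟩ := hd n (j + k)
      refine ⟨C, fun x => ?_⟩
      simpa [pow_add, mul_assoc] using hC x
    | zero => exact fun k => ⟨0, fun x => by simp⟩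
    | add f g _ _ hf hg =>
      intro k
      obtain ⟨C, hC⟩ := hf k
      obtain ⟨B, hB⟩ := hg k
      refine ⟨C + B, fun x => ?_⟩
      calc |x| ^ k * ‖f x + g x‖ ≤ |x| ^ k * (‖f x‖ + ‖g x‖) := by gcongr; exact norm_add_le _ _
        _ ≤ C + B := by rw [mul_add]; exact add_le_add (hC x) (hB x)
    | smul c f _ hf =>
      intro k
      obtain ⟨C, hC⟩ := hf k
      refine ⟨‖c‖ * C, fun x => ?_⟩
      calc |x| ^ k * ‖c • f x‖ = ‖c‖ * (|x| ^ k * ‖f x‖) := by rw [norm_smul]; ring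
        _ ≤ ‖c‖ * C := by gcongr; exact hC x

theorem IsSchwartz.evenPart {f : ℝ → ℂ} (hf : IsSchwartz f) :
    IsSchwartz fun x => 2⁻¹ * (f x + f (-x)) :=
  (hf.add hf.comp_neg).const_mul _

/-- The derivative of an even Schwartz function is `x` times an even Schwartz function. -/
theorem IsSchwartz.exists_deriv_eq_id_mul {f : ℝ → ℂ} (hf : IsSchwartz f) (he : f.Even) :
    ∃ g : ℝ → ℂ, IsSchwartz g ∧ g.Even ∧ ∀ x : ℝ, deriv f x = (x : ℂ) * g x := by
  have hodd (x : ℝ) : deriv f (-x) = - deriv f x := by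
    have := deriv_comp_neg f x
    rw [show (fun x => f (-x)) = f from funext he] at this
    rw [this, neg_neg]
  have h0 : deriv f 0 = 0 := by
    have := hodd 0
    rw [neg_zero] at this
    exact self_eq_neg.1 this
  obtain ⟨g, hg, hfg⟩ := hf.deriv.exists_sub_mul h0
  refine ⟨_, hg.evenPart, fun x => by simp [add_comm], fun x => ?_⟩
  have h1 := hfg x
  have h2 := hfg (-x)
  rw [hodd] at h2
  push_cast at h1 h2
  linear_combination (h1 - h2) / 2

/-- An even Schwartz function vanishing at `a` is `x² - a²` times an even Schwartz function. -/
theorem IsSchwartz.exists_sq_sub_sq_mul {f : ℝ → ℂ} (hf : IsSchwartz f) (he : f.Even) {a : ℝ}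
    (ha : f a = 0) :
    ∃ g : ℝ → ℂ, IsSchwartz g ∧ g.Even ∧ ∀ x : ℝ, f x = ((x : ℂ) ^ 2 - (a : ℂ) ^ 2) * g x := by
  obtain ⟨g, hg, hfg⟩ := hf.exists_sub_mul ha
  have hga : g (-a) = 0 := by
    rcases eq_or_ne a 0 with rfl | h
    · obtain ⟨k, -, -, hk⟩ := hf.exists_deriv_eq_id_mul he
      have h1 : HasDerivAt (fun x : ℝ => ((x : ℂ) - (0 : ℝ))) 1 0 :=
        ((hasDerivAt_id (0 : ℝ)).ofReal_comp).sub_const _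
      have h2 := (h1.mul (hg.differentiable 0).hasDerivAt).deriv
      rw [show ((fun x : ℝ => ((x : ℂ) - (0 : ℝ))) * g) = f from (funext hfg).symm, hk] at h2
      simpa using h2.symm
    · have := hfg (-a)
      rw [he, ha] at this
      have h3 : ((-a : ℝ) : ℂ) - a ≠ 0 := by
        rw [← Complex.ofReal_sub, Complex.ofReal_ne_zero]
        intro h4
        apply h
        linarith
      exact (mul_eq_zero.1 this.symm).resolve_left h3
  obtain ⟨k, hk, hgk⟩ := hg.exists_sub_mul hga
  refine ⟨_, hk.evenPart, fun x => by simp [add_comm], fun x => ?_⟩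
  have h1 := hfg x
  have h2 := hfg (-x)
  rw [hgk] at h1 h2
  rw [he] at h2
  push_cast at h1 h2
  linear_combination (h1 + h2) / 2

/-- The entire function `w ↦ ∑ (-w)^k / (k! Γ(k+m+1))`, with `j_m(v) = Γ(m+1) S_m(v²/4)`. -/
noncomputable def besselSeries (m w : ℝ) : ℝ :=
  ∑' k : ℕ, (-1 : ℝ) ^ k / (Nat.factorial k * Real.Gamma (k + m + 1)) * w ^ k

theorem nbessel_eq (m v : ℝ) : nbessel m v = Real.Gamma (m + 1) * besselSeries m ((v / 2) ^ 2) := by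
  simp only [nbessel, besselSeries, pow_mul]

section Bessel

variable {m : ℝ}

theorem inv_Gamma_natCast_add_le (hm : -(1 / 2 : ℝ) < m) (k : ℕ) :
    (Real.Gamma (k + m + 1))⁻¹ ≤ (Real.Gamma (m + 1))⁻¹ * 2 ^ k := by
  induction k with
  | zero => simp
  | succ k ih =>
    have hk : (0 : ℝ) ≤ k := k.cast_nonneg
    have hG : 0 < Real.Gamma (k + m + 1) := Real.Gamma_pos_of_pos (by linarith)
    have : Real.Gamma ((k + 1 : ℕ) + m + 1) = (k + m + 1) * Real.Gamma (k + m + 1) := by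
      rw [← Real.Gamma_add_one (by linarith)]
      push_cast
      ring_nf
    rw [this, mul_inv, pow_succ, ← mul_assoc, mul_comm]
    have h2 : ((k : ℝ) + m + 1)⁻¹ ≤ 2 := by
      rw [inv_le_comm₀ (by linarith) two_pos]
      linarith
    have h0 : (0 : ℝ) ≤ ((k : ℝ) + m + 1)⁻¹ := inv_nonneg.2 (by linarith)
    have hG1 : 0 ≤ (Real.Gamma (m + 1))⁻¹ := inv_nonneg.2 (Real.Gamma_pos_of_pos (by linarith)).le
    exact mul_le_mul ih h2 h0 (by positivity)

theorem abs_besselSeries_coeff_le (hm : -(1 / 2 : ℝ) < m) (k : ℕ) :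
    |(-1 : ℝ) ^ k / (Nat.factorial k * Real.Gamma (k + m + 1))| ≤
      (Real.Gamma (m + 1))⁻¹ * (2 ^ k / Nat.factorial k) := by
  have hk : (0 : ℝ) ≤ k := k.cast_nonneg
  have hG : 0 < Real.Gamma (k + m + 1) := Real.Gamma_pos_of_pos (by linarith)
  have := inv_Gamma_natCast_add_le hm k
  rw [abs_div, abs_pow, abs_neg, abs_one, one_pow, abs_of_pos (by positivity), one_div, mul_inv]
  calc ((Nat.factorial k : ℝ))⁻¹ * (Real.Gamma (k + m + 1))⁻¹
      ≤ ((Nat.factorial k : ℝ))⁻¹ * ((Real.Gamma (m + 1))⁻¹ * 2 ^ k) := by gcongr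
    _ = _ := by ring

theorem summable_besselSeries (hm : -(1 / 2 : ℝ) < m) (w : ℝ) :
    Summable fun k : ℕ => (-1 : ℝ) ^ k / (Nat.factorial k * Real.Gamma (k + m + 1)) * w ^ k := by
  refine Summable.of_norm_bounded
    ((Real.summable_pow_div_factorial (2 * |w|)).mul_left (Real.Gamma (m + 1))⁻¹) fun k => ?_
  rw [norm_mul, norm_pow, Real.norm_eq_abs, Real.norm_eq_abs]
  calc _ ≤ (Real.Gamma (m + 1))⁻¹ * (2 ^ k / Nat.factorial k) * |w| ^ k := by
        gcongr; exact abs_besselSeries_coeff_le hm k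
    _ = _ := by rw [mul_pow]; ring

theorem besselSeries_deriv_coeff (k : ℕ) :
    (-1 : ℝ) ^ (k + 1) / (Nat.factorial (k + 1) * Real.Gamma ((k + 1 : ℕ) + m + 1)) * (k + 1 : ℕ) =
      -((-1 : ℝ) ^ k / (Nat.factorial k * Real.Gamma (k + (m + 1) + 1))) := by
  rw [Nat.factorial_succ, pow_succ,
    show (((k + 1 : ℕ) : ℝ) + m + 1) = k + (m + 1) + 1 by push_cast; ring]
  have : ((k + 1 : ℕ) : ℝ) ≠ 0 := Nat.cast_ne_zero.2 k.succ_ne_zero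
  have h2 : ((Nat.factorial k : ℕ) : ℝ) ≠ 0 := Nat.cast_ne_zero.2 k.factorial_ne_zero
  rw [Nat.cast_mul, mul_assoc, div_mul_eq_mul_div, ← neg_div]
  rw [mul_neg, mul_one, mul_comm (_ : ℝ) ((k + 1 : ℕ) : ℝ)]
  exact mul_div_mul_left _ _ this

theorem hasDerivAt_besselSeries (hm : -(1 / 2 : ℝ) < m) (w : ℝ) :
    HasDerivAt (besselSeries m) (-besselSeries (m + 1) w) w := by
  set a : ℕ → ℝ := fun k => (-1 : ℝ) ^ k / (Nat.factorial k * Real.Gamma (k + m + 1)) with ha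
  have hshift (y : ℝ) (k : ℕ) : a (k + 1) * (((k + 1 : ℕ) : ℝ) * y ^ (k + 1 - 1)) =
      -((-1 : ℝ) ^ k / (Nat.factorial k * Real.Gamma (k + (m + 1) + 1)) * y ^ k) := by
    rw [← mul_assoc, besselSeries_deriv_coeff, Nat.add_sub_cancel, neg_mul]
  set R := |w| + 1
  have hR : 0 ≤ R := by positivity
  have hu : Summable fun k : ℕ => ‖a k * ((k : ℝ) * R ^ (k - 1))‖ := by
    rw [← summable_nat_add_iff 1]
    simp only [hshift, norm_neg]
    exact (summable_besselSeries (m := m + 1) (by linarith) R).norm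
  have key := hasDerivAt_tsum_of_isPreconnected (𝕜 := ℝ) (g := fun k y => a k * y ^ k)
    (g' := fun k y => a k * ((k : ℝ) * y ^ (k - 1)))
    (t := Metric.ball 0 R) (y₀ := w) (y := w) hu Metric.isOpen_ball
    (convex_ball 0 R).isPreconnected (fun k y _ => (hasDerivAt_pow k y).const_mul _) ?_
    ?_ (summable_besselSeries hm w) ?_
  · refine key.congr_deriv ?_
    have hs : Summable fun k : ℕ => a k * ((k : ℝ) * w ^ (k - 1)) := by
      rw [← summable_nat_add_iff 1]
      simp only [hshift]
      exact (summable_besselSeries (m := m + 1) (by linarith) w).neg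
    rw [hs.tsum_eq_zero_add, tsum_congr (hshift w), tsum_neg]
    simp [besselSeries]
  · intro k y hy
    have hy : |y| ≤ R := by simpa using (Metric.mem_ball.1 hy).le
    simp only [norm_mul, norm_pow, Real.norm_eq_abs, abs_of_nonneg hR]
    gcongr
  all_goals simp [R]

/-- Contiguous relation of the series. -/
theorem besselSeries_contiguous (hm : -(1 / 2 : ℝ) < m) (w : ℝ) :
    w * besselSeries (m + 2) w = (m + 1) * besselSeries (m + 1) w - besselSeries m w := by
  have h0 := summable_besselSeries hm w
  have h1 := summable_besselSeries (m := m + 1) (by linarith) w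
  have h2 := summable_besselSeries (m := m + 2) (by linarith) w
  rw [besselSeries, besselSeries, besselSeries, ← tsum_mul_left, ← tsum_mul_left,
    ← (h1.mul_left (m + 1)).tsum_sub h0, ((h1.mul_left (m + 1)).sub h0).tsum_eq_zero_add]
  have hG : Real.Gamma (m + 1 + 1) = (m + 1) * Real.Gamma (m + 1) :=
    Real.Gamma_add_one (by linarith)
  have hGp : 0 < Real.Gamma (m + 1) := Real.Gamma_pos_of_pos (by linarith)
  have hz : (m + 1) * ((-1 : ℝ) ^ 0 / (Nat.factorial 0 * Real.Gamma ((0 : ℕ) + (m + 1) + 1)) * w ^ 0)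
      - (-1 : ℝ) ^ 0 / (Nat.factorial 0 * Real.Gamma ((0 : ℕ) + m + 1)) * w ^ 0 = 0 := by
    have : m + 1 ≠ 0 := by linarith
    simp only [Nat.cast_zero, zero_add, hG]
    simp
    field_simp
    simp
  rw [hz, zero_add]
  refine tsum_congr fun k => ?_
  have hk : (0 : ℝ) ≤ k := k.cast_nonneg
  have e1 : Real.Gamma ((k + 1 : ℕ) + (m + 1) + 1) = (k + m + 2) * Real.Gamma (k + m + 2) := by
    rw [← Real.Gamma_add_one (by linarith)]
    push_cast
    ring_nf
  have e2 : Real.Gamma (k + (m + 2) + 1) = (k + m + 2) * Real.Gamma (k + m + 2) := by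
    rw [← Real.Gamma_add_one (by linarith)]
    ring_nf
  have e3 : Real.Gamma ((k + 1 : ℕ) + m + 1) = Real.Gamma (k + m + 2) := by
    push_cast
    ring_nf
  have hG' : Real.Gamma (k + m + 2) ≠ 0 := (Real.Gamma_pos_of_pos (by linarith)).ne'
  have hk2 : (k : ℝ) + m + 2 ≠ 0 := by linarith
  have hk1 : (k : ℝ) + 1 ≠ 0 := by linarith
  have h2 : ((Nat.factorial k : ℕ) : ℝ) ≠ 0 := Nat.cast_ne_zero.2 k.factorial_ne_zero
  rw [e1, e2, e3, Nat.factorial_succ]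
  push_cast
  field_simp
  ring

theorem Gamma_add_two_eq (hm : -(1 / 2 : ℝ) < m) :
    Real.Gamma (m + 1 + 1) = (m + 1) * Real.Gamma (m + 1) :=
  Real.Gamma_add_one (by linarith)

theorem nbessel_zero (hm : -(1 / 2 : ℝ) < m) : nbessel m 0 = 1 := by
  have : Real.Gamma (m + 1) ≠ 0 := (Real.Gamma_pos_of_pos (by linarith)).ne'
  rw [nbessel, tsum_eq_single 0 fun k hk => by simp [hk]]
  simp [this]

theorem nbessel_neg (m v : ℝ) : nbessel m (-v) = nbessel m v := by
  simp only [nbessel_eq, neg_div, neg_sq]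

theorem hasDerivAt_nbessel (hm : -(1 / 2 : ℝ) < m) (v : ℝ) :
    HasDerivAt (nbessel m) (-v / (2 * (m + 1)) * nbessel (m + 1) v) v := by
  have h1 : HasDerivAt (fun v : ℝ => (v / 2) ^ 2) (v / 2) v := by
    refine (((hasDerivAt_id v).div_const 2).pow 2).congr_deriv ?_
    simp
    ring
  have h2 := ((hasDerivAt_besselSeries hm ((v / 2) ^ 2)).comp v h1).const_mul (Real.Gamma (m + 1))
  rw [show nbessel m = fun v => Real.Gamma (m + 1) * besselSeries m ((v / 2) ^ 2) from
    funext (nbessel_eq m)]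
  refine h2.congr_deriv ?_
  have : m + 1 ≠ 0 := by linarith
  rw [nbessel_eq, Gamma_add_two_eq hm]
  field_simp

theorem continuous_nbessel (hm : -(1 / 2 : ℝ) < m) : Continuous (nbessel m) :=
  continuous_iff_continuousAt.2 fun v => (hasDerivAt_nbessel hm v).continuousAt

theorem nbessel_contiguous (hm : -(1 / 2 : ℝ) < m) (v : ℝ) :
    v ^ 2 / (4 * (m + 1) * (m + 2)) * nbessel (m + 2) v = nbessel (m + 1) v - nbessel m v := by
  have h := besselSeries_contiguous hm ((v / 2) ^ 2)
  have h1 := Gamma_add_two_eq hm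
  have h2 := Gamma_add_two_eq (m := m + 1) (by linarith)
  have : m + 1 ≠ 0 := by linarith
  have : m + 2 ≠ 0 := by linarith
  rw [nbessel_eq, nbessel_eq, nbessel_eq, show m + 2 + 1 = m + 1 + 1 + 1 by ring, h2, h1]
  calc _ = Real.Gamma (m + 1) * ((v / 2) ^ 2 * besselSeries (m + 2) ((v / 2) ^ 2)) := by
        rw [show m + 1 + 1 = m + 2 by ring]
        field_simp
        ring
    _ = _ := by rw [h]; ring

/-- The energy `j² + (j')²` is nonincreasing on the positive half-line, so `|j| ≤ 1`. -/
theorem abs_nbessel_le_one (hm : -(1 / 2 : ℝ) < m) (v : ℝ) : |nbessel m v| ≤ 1 := by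
  wlog hv : 0 ≤ v generalizing v
  · rw [← nbessel_neg]
    exact this (-v) (by linarith)
  let E : ℝ → ℝ := fun v => nbessel m v ^ 2 + (v / (2 * (m + 1)) * nbessel (m + 1) v) ^ 2
  have hm1 : 0 < m + 1 := by linarith
  have hm2 : 0 < m + 2 := by linarith
  have hE (v : ℝ) : HasDerivAt E (-(v * (2 * m + 1) / (2 * (m + 1) ^ 2) * nbessel (m + 1) v ^ 2)) v := by
    have h1 := (hasDerivAt_nbessel hm v).pow 2
    have h2 := ((((hasDerivAt_id v).div_const (2 * (m + 1))).mul
      (hasDerivAt_nbessel (m := m + 1) (by linarith) v)).pow 2)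
    refine (h1.add h2).congr_deriv ?_
    have h3 := nbessel_contiguous hm v
    rw [show m + 1 + 1 = m + 2 by ring]
    have h4 : v * (v / (2 * (m + 2)) * nbessel (m + 2) v) =
        2 * (m + 1) * (nbessel (m + 1) v - nbessel m v) := by
      rw [← h3]; field_simp; ring
    simp only [id, Pi.mul_apply]
    push_cast
    field_simp at h4 ⊢
    linear_combination (-v * nbessel (m + 1) v) * h4
  have hanti : AntitoneOn E (Set.Ici 0) := by
    refine antitoneOn_of_deriv_nonpos (convex_Ici 0)
      (fun x _ => (hE x).continuousAt.continuousWithinAt)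
      (fun x _ => (hE x).differentiableAt.differentiableWithinAt) fun x hx => ?_
    rw [interior_Ici] at hx
    have hx : 0 < x := hx
    have : 0 < 2 * m + 1 := by linarith
    rw [(hE x).deriv, neg_nonpos]
    positivity
  have h := hanti Set.self_mem_Ici hv hv
  simp only [E, nbessel_zero hm] at h
  rw [← sq_le_one_iff_abs_le_one]
  rw [zero_div, zero_mul] at h
  nlinarith [sq_nonneg (v / (2 * (m + 1)) * nbessel (m + 1) v)]

end Bessel

theorem abs_rpow_add_two_mul {p : ℝ} (hp : 0 ≤ p) (n : ℕ) (u : ℝ) :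
    |u| ^ (p + 2 * n) = |u| ^ p * (u ^ n) ^ 2 := by
  rw [Real.rpow_add_of_nonneg (abs_nonneg u) hp (by positivity), ← pow_mul, mul_comm n 2,
    pow_mul, ← sq_abs, ← pow_mul]
  congr 1
  exact_mod_cast Real.rpow_natCast |u| (2 * n)

theorem hasDerivAt_abs_rpow_mul_self {p : ℝ} (hp : 0 < p) (u : ℝ) :
    HasDerivAt (fun u : ℝ => |u| ^ p * u) ((p + 1) * |u| ^ p) u := by
  rcases eq_or_ne u 0 with rfl | hu
  · rw [hasDerivAt_iff_tendsto_slope_zero, abs_zero, Real.zero_rpow hp.ne', mul_zero, mul_zero]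
    have h : Filter.Tendsto (fun t : ℝ => |t| ^ p) (nhdsWithin 0 {0}ᶜ) (nhds 0) := by
      have : ContinuousAt (fun t : ℝ => |t| ^ p) 0 :=
        (continuous_abs.rpow_const fun _ => Or.inr hp.le).continuousAt
      have := this.tendsto.mono_left (nhdsWithin_le_nhds (s := {0}ᶜ))
      simpa [Real.zero_rpow hp.ne'] using this
    refine h.congr' ?_
    filter_upwards [self_mem_nhdsWithin] with t ht
    have ht : t ≠ 0 := ht
    simp
    field_simp
  · refine (((hasDerivAt_abs hu).rpow_const (p := p) (Or.inl (abs_ne_zero.2 hu))).mul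
      (hasDerivAt_id u)).congr_deriv ?_
    have h1 : (SignType.sign u : ℝ) * u = |u| := sign_mul_self u
    have h2 : |u| ^ p = |u| ^ (p - 1) * |u| := by
      rw [← Real.rpow_add_one (abs_ne_zero.2 hu), sub_add_cancel]
    simp only [id]
    rw [h2]
    linear_combination (p * |u| ^ (p - 1)) * h1

theorem IsSchwartz.integrable_abs_rpow_mul {f : ℝ → ℂ} (hf : IsSchwartz f) {p : ℝ} (hp : 0 ≤ p) :
    Integrable fun u => |u| ^ p * ‖f u‖ := by
  obtain ⟨n, hn⟩ := exists_nat_ge p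
  have hc := hf.continuous
  obtain ⟨g, rfl⟩ := hf
  refine ((g.integrable_pow_mul volume 0).add (g.integrable_pow_mul volume n)).mono'
    (Continuous.aestronglyMeasurable ?_) (Filter.Eventually.of_forall fun u => ?_)
  · exact (continuous_abs.rpow_const fun _ => Or.inr hp).mul hc.norm
  · have : |u| ^ p ≤ 1 + |u| ^ n := by
      rcases le_total |u| 1 with h | h
      · have := Real.rpow_le_one (abs_nonneg u) h hp
        have : 0 ≤ |u| ^ n := by positivity
        linarith
      · have := Real.rpow_le_rpow_of_exponent_le h hn
        rw [Real.rpow_natCast] at this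
        linarith
    rw [Real.norm_of_nonneg (by positivity)]
    simpa [add_mul] using mul_le_mul_of_nonneg_right this (norm_nonneg (g u))

theorem IsSchwartz.integrable_kernel {f : ℝ → ℂ} (hf : IsSchwartz f) {p : ℝ} (hp : 0 ≤ p)
    {φ : ℝ → ℝ} (hφ : Continuous φ) (hb : ∀ u, |φ u| ≤ 1) :
    Integrable fun u => ((φ u * |u| ^ p : ℝ) : ℂ) * f u := by
  have hc := hf.continuous
  have hw : Continuous fun u : ℝ => |u| ^ p := continuous_abs.rpow_const fun _ => Or.inr hp
  refine (hf.integrable_abs_rpow_mul hp).mono'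
    (Continuous.aestronglyMeasurable (by fun_prop)) (Filter.Eventually.of_forall fun u => ?_)
  have h0 : 0 ≤ |u| ^ p := by positivity
  rw [norm_mul, Complex.norm_real, Real.norm_eq_abs, abs_mul, abs_of_nonneg h0]
  have := mul_le_mul_of_nonneg_right (hb u) h0
  rw [one_mul] at this
  gcongr

/-- Normalizing constant of the Hankel transform. -/
noncomputable def hankelConst (m : ℝ) : ℝ := 1 / (2 ^ (m + 1) * Real.Gamma (m + 1))

/-- The Hankel transform of order `m` with kernel `nbessel m`, as an integral over the line. -/
noncomputable def hankel (m : ℝ) (f : ℝ → ℂ) (v : ℝ) : ℂ :=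
  (hankelConst m : ℂ) * ∫ u : ℝ, ((nbessel m (u * v) * |u| ^ (2 * m + 1) : ℝ) : ℂ) * f u

section Hankel

variable {m : ℝ} {f g : ℝ → ℂ}

theorem hankelConst_succ (hm : -(1 / 2 : ℝ) < m) :
    hankelConst (m + 1) * (2 * (m + 1)) = hankelConst m := by
  have h1 : Real.Gamma (m + 1) ≠ 0 := (Real.Gamma_pos_of_pos (by linarith)).ne'
  have h2 : m + 1 ≠ 0 := by linarith
  rw [hankelConst, hankelConst, Gamma_add_two_eq hm, Real.rpow_add_one two_ne_zero]
  field_simp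

theorem integrable_hankel (hm : -(1 / 2 : ℝ) < m) (hf : IsSchwartz f) (v : ℝ) :
    Integrable fun u : ℝ => ((nbessel m (u * v) * |u| ^ (2 * m + 1) : ℝ) : ℂ) * f u :=
  hf.integrable_kernel (by linarith) (φ := fun u => nbessel m (u * v))
    ((continuous_nbessel hm).comp (continuous_mul_const v)) fun _ => abs_nbessel_le_one hm _

theorem hankel_add (hm : -(1 / 2 : ℝ) < m) (hf : IsSchwartz f) (hg : IsSchwartz g) (v : ℝ) :
    hankel m (fun u => f u + g u) v = hankel m f v + hankel m g v := by
  simp only [hankel, mul_add]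
  rw [integral_add (integrable_hankel hm hf v) (integrable_hankel hm hg v), mul_add]

theorem hankel_const_mul (c : ℂ) (f : ℝ → ℂ) (v : ℝ) :
    hankel m (fun u => c * f u) v = c * hankel m f v := by
  simp only [hankel, mul_left_comm _ c, integral_const_mul]

theorem hankel_even (m : ℝ) (f : ℝ → ℂ) : (hankel m f).Even := by
  intro v
  simp only [hankel, mul_neg, nbessel_neg]

theorem hankel_eq_zero_of_odd (hf : f.Odd) (v : ℝ) : hankel m f v = 0 := by
  have h := integral_neg_eq_self
    (fun u : ℝ => ((nbessel m (u * v) * |u| ^ (2 * m + 1) : ℝ) : ℂ) * f u) volume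
  simp only [neg_mul, nbessel_neg, abs_neg, hf _, mul_neg, integral_neg] at h
  rw [hankel, self_eq_neg.1 h.symm, mul_zero]

theorem norm_hankel_le (hm : -(1 / 2 : ℝ) < m) (hf : IsSchwartz f) (v : ℝ) :
    ‖hankel m f v‖ ≤ |hankelConst m| * ∫ u : ℝ, |u| ^ (2 * m + 1) * ‖f u‖ := by
  rw [hankel, norm_mul, Complex.norm_real, Real.norm_eq_abs]
  gcongr
  refine norm_integral_le_of_norm_le (hf.integrable_abs_rpow_mul (by linarith))
    (Filter.Eventually.of_forall fun u => ?_)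
  have h0 : 0 ≤ |u| ^ (2 * m + 1) := by positivity
  rw [norm_mul, Complex.norm_real, Real.norm_eq_abs, abs_mul, abs_of_nonneg h0]
  have := mul_le_mul_of_nonneg_right (abs_nbessel_le_one hm (u * v)) h0
  rw [one_mul] at this
  gcongr

theorem hasDerivAt_hankel (hm : -(1 / 2 : ℝ) < m) (hf : IsSchwartz f) (v : ℝ) :
    HasDerivAt (hankel m f) (-(v : ℂ) * hankel (m + 1) f v) v := by
  have hm' : -(1 / 2 : ℝ) < m + 1 := by linarith
  have hm0 : 0 < 2 * (m + 1) := by linarith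
  have hw (u : ℝ) : |u| ^ (2 * (m + 1) + 1) = |u| ^ (2 * m + 1) * u ^ 2 := by
    have := abs_rpow_add_two_mul (p := 2 * m + 1) (by linarith) 1 u
    rw [pow_one] at this
    rw [← this]
    push_cast
    ring_nf
  have hI := (integrable_hankel hm' hf v).const_mul ((-v / (2 * (m + 1)) : ℝ) : ℂ)
  have key := (hasDerivAt_integral_of_dominated_loc_of_deriv_le (μ := volume)
    (F := fun (v u : ℝ) => ((nbessel m (u * v) * |u| ^ (2 * m + 1) : ℝ) : ℂ) * f u)
    (F' := fun (v u : ℝ) => ((-v / (2 * (m + 1)) : ℝ) : ℂ) *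
      (((nbessel (m + 1) (u * v) * |u| ^ (2 * (m + 1) + 1) : ℝ) : ℂ) * f u))
    (bound := fun u => (|v| + 1) / (2 * (m + 1)) * (|u| ^ (2 * (m + 1) + 1) * ‖f u‖))
    (Icc_mem_nhds (by linarith : v - 1 < v) (by linarith : v < v + 1))
    (Filter.Eventually.of_forall fun y => (integrable_hankel hm hf y).aestronglyMeasurable)
    (integrable_hankel hm hf v) hI.aestronglyMeasurable ?_
    ((hf.integrable_abs_rpow_mul (by linarith)).const_mul _) ?_).2
  · refine (key.const_mul (hankelConst m : ℂ)).congr_deriv ?_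
    rw [integral_const_mul, hankel, ← hankelConst_succ hm]
    have : (m : ℂ) + 1 ≠ 0 := by
      have : m + 1 ≠ 0 := by linarith
      exact_mod_cast this
    generalize (∫ u : ℝ, ((nbessel (m + 1) (u * v) * |u| ^ (2 * (m + 1) + 1) : ℝ) : ℂ) * f u) = I
    push_cast
    field_simp
  · refine Filter.Eventually.of_forall fun u y hy => ?_
    have hy' : |y| ≤ |v| + 1 := by
      have h1 : |y - v| ≤ 1 := abs_le.2 ⟨by linarith [hy.1], by linarith [hy.2]⟩
      have h2 := abs_sub_abs_le_abs_sub y v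
      linarith
    have h0 : 0 ≤ |u| ^ (2 * (m + 1) + 1) := by positivity
    have h3 := mul_le_mul_of_nonneg_right (abs_nbessel_le_one hm' (u * y)) h0
    rw [one_mul] at h3
    rw [norm_mul, norm_mul, Complex.norm_real, Complex.norm_real, Real.norm_eq_abs,
      Real.norm_eq_abs, abs_div, abs_neg, abs_of_pos hm0, abs_mul, abs_of_nonneg h0]
    gcongr
  · refine Filter.Eventually.of_forall fun u y _ => ?_
    have h1 : HasDerivAt (fun y : ℝ => u * y) u y := by
      simpa using (hasDerivAt_id y).const_mul u
    have h2 := ((((hasDerivAt_nbessel hm (u * y)).comp y h1).mul_const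
      (|u| ^ (2 * m + 1))).ofReal_comp).mul_const (f u)
    refine h2.congr_deriv ?_
    rw [hw]
    push_cast
    ring

/-- Integration by parts: `H_{m+1}` of `x⁻¹ f'` is `-H_m f`. -/
theorem hankel_succ_of_deriv_eq (hm : -(1 / 2 : ℝ) < m) (hf : IsSchwartz f) (hg : IsSchwartz g)
    (hfg : ∀ u : ℝ, deriv f u = (u : ℂ) * g u) (v : ℝ) :
    hankel (m + 1) g v = -hankel m f v := by
  have hm' : -(1 / 2 : ℝ) < m + 1 := by linarith
  have hw (u : ℝ) : |u| ^ (2 * (m + 1) + 1) = |u| ^ (2 * m + 1) * u ^ 2 := by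
    have := abs_rpow_add_two_mul (p := 2 * m + 1) (by linarith) 1 u
    rw [pow_one] at this
    rw [← this]
    push_cast
    ring_nf
  have hI1 := (integrable_hankel hm hf v).const_mul ((2 * (m + 1) : ℝ) : ℂ)
  have hI2 := integrable_hankel hm' hg v
  have h0 := integral_eq_zero_of_hasDerivAt_of_integrable
    (f := fun u : ℝ => ((nbessel (m + 1) (u * v) * |u| ^ (2 * m + 1) : ℝ) : ℂ) * ((u : ℂ) * f u))
    (f' := fun u : ℝ => ((2 * (m + 1) : ℝ) : ℂ) *
      (((nbessel m (u * v) * |u| ^ (2 * m + 1) : ℝ) : ℂ) * f u) +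
      ((nbessel (m + 1) (u * v) * |u| ^ (2 * (m + 1) + 1) : ℝ) : ℂ) * g u) (fun u => ?_)
    (hI1.add hI2) (hf.id_mul.integrable_kernel (by linarith)
      (φ := fun u => nbessel (m + 1) (u * v))
      ((continuous_nbessel hm').comp (continuous_mul_const v)) fun _ => abs_nbessel_le_one hm' _)
  · rw [integral_add hI1 hI2, integral_const_mul] at h0
    rw [hankel, hankel, ← hankelConst_succ hm]
    push_cast at h0 ⊢
    linear_combination (hankelConst (m + 1) : ℂ) * h0
  · have h1 : HasDerivAt (fun u : ℝ => u * v) v u := by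
      simpa using (hasDerivAt_id u).mul_const v
    have h2 := (((hasDerivAt_nbessel hm' (u * v)).comp u h1).mul
      (hasDerivAt_abs_rpow_mul_self (p := 2 * m + 1) (by linarith) u)).ofReal_comp
    have h3 := h2.mul (hf.differentiable u).hasDerivAt
    convert! h3 using 1
    · funext u
      simp only [Pi.mul_apply, Function.comp]
      push_cast
      ring
    · rw [hfg, hw]
      have h4 := nbessel_contiguous hm (u * v)
      have hA : m + 1 ≠ 0 := by linarith
      have hB : m + 2 ≠ 0 := by linarith
      have h5 : -(u * v) / (2 * (m + 1 + 1)) * nbessel (m + 1 + 1) (u * v) * v * u =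
          2 * (m + 1) * (nbessel m (u * v) - nbessel (m + 1) (u * v)) := by
        rw [show m + 1 + 1 = m + 2 by ring, ← neg_sub (nbessel (m + 1) (u * v)), ← h4]
        field_simp
        ring
      have h6 := congrArg (fun x : ℝ => (x : ℂ)) h5
      simp only [Function.comp, Pi.mul_apply]
      push_cast at h6 ⊢
      linear_combination (- (|u| ^ (2 * m + 1) : ℝ) * f u) * h6

theorem hankel_sq_mul (hm : -(1 / 2 : ℝ) < m) (hf : IsSchwartz f) (v : ℝ) :
    hankel m (fun u => (u : ℂ) ^ 2 * f u) v =
      (2 * m + 2) * hankel (m + 1) f v - (v : ℂ) ^ 2 * hankel (m + 2) f v := by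
  have hm1 : -(1 / 2 : ℝ) < m + 1 := by linarith
  have hm2 : -(1 / 2 : ℝ) < m + 2 := by linarith
  have hc1 := hankelConst_succ hm
  have hc2 := hankelConst_succ hm1
  rw [show m + 1 + 1 = m + 2 by ring] at hc2
  have hw1 (u : ℝ) : |u| ^ (2 * (m + 1) + 1) = |u| ^ (2 * m + 1) * u ^ 2 := by
    have := abs_rpow_add_two_mul (p := 2 * m + 1) (by linarith) 1 u
    rw [pow_one] at this
    rw [← this]
    push_cast
    ring_nf
  have hw2 (u : ℝ) : |u| ^ (2 * (m + 2) + 1) = |u| ^ (2 * m + 1) * u ^ 4 := by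
    have := abs_rpow_add_two_mul (p := 2 * m + 1) (by linarith) 2 u
    rw [← pow_mul] at this
    rw [← this]
    push_cast
    ring_nf
  have hI1 := integrable_hankel hm1 hf v
  have hI2 := (integrable_hankel hm2 hf v).const_mul ((v ^ 2 / (4 * (m + 1) * (m + 2)) : ℝ) : ℂ)
  have key : (∫ u : ℝ, ((nbessel m (u * v) * |u| ^ (2 * m + 1) : ℝ) : ℂ) * ((u : ℂ) ^ 2 * f u)) =
      (∫ u : ℝ, ((nbessel (m + 1) (u * v) * |u| ^ (2 * (m + 1) + 1) : ℝ) : ℂ) * f u) -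
      ((v ^ 2 / (4 * (m + 1) * (m + 2)) : ℝ) : ℂ) *
      ∫ u : ℝ, ((nbessel (m + 2) (u * v) * |u| ^ (2 * (m + 2) + 1) : ℝ) : ℂ) * f u := by
    rw [← integral_const_mul, ← integral_sub hI1 hI2]
    congr 1
    funext u
    have h4 := congrArg (fun x : ℝ => (x : ℂ)) (nbessel_contiguous hm (u * v))
    rw [hw1, hw2]
    push_cast at h4 ⊢
    linear_combination ((|u| ^ (2 * m + 1) : ℝ) * (u : ℂ) ^ 2 * f u) * h4
  have hA : (m : ℂ) + 1 ≠ 0 := by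
    have : m + 1 ≠ 0 := by linarith
    exact_mod_cast this
  have hB : (m : ℂ) + 2 ≠ 0 := by
    have : m + 2 ≠ 0 := by linarith
    exact_mod_cast this
  rw [hankel, hankel, hankel, key, ← hc1, ← hc2]
  generalize (∫ u : ℝ, ((nbessel (m + 1) (u * v) * |u| ^ (2 * (m + 1) + 1) : ℝ) : ℂ) * f u) = I
  generalize (∫ u : ℝ, ((nbessel (m + 2) (u * v) * |u| ^ (2 * (m + 2) + 1) : ℝ) : ℂ) * f u) = J
  push_cast
  field_simp
  ring

/-- The Hankel transform turns the Bessel operator `f'' + (2m+1) x⁻¹ f'` into multiplication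
by `-v²`. Here `g = x⁻¹ f'` and `h = x⁻¹ g'`. -/
theorem sq_mul_hankel (hm : -(1 / 2 : ℝ) < m) {h : ℝ → ℂ} (hf : IsSchwartz f) (hg : IsSchwartz g)
    (hh : IsSchwartz h) (hfg : ∀ u : ℝ, deriv f u = (u : ℂ) * g u)
    (hgh : ∀ u : ℝ, deriv g u = (u : ℂ) * h u) (v : ℝ) :
    (v : ℂ) ^ 2 * hankel m f v =
      -hankel m (fun u => (2 * m + 2) * g u + (u : ℂ) ^ 2 * h u) v := by
  have hm1 : -(1 / 2 : ℝ) < m + 1 := by linarith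
  have e1 := hankel_succ_of_deriv_eq hm hf hg hfg v
  have e2 := hankel_succ_of_deriv_eq hm1 hg hh hgh v
  have e3 := hankel_succ_of_deriv_eq hm hg hh hgh v
  rw [show m + 1 + 1 = m + 2 by ring] at e2
  rw [hankel_add hm (hg.const_mul _) (hh.pow_mul 2), hankel_const_mul, hankel_sq_mul hm hh, e2, e3,
    e1]
  ring

theorem rapidDecay_hankel (hm : -(1 / 2 : ℝ) < m) (hf : IsSchwartz f) (he : f.Even) :
    RapidDecay (hankel m f) := by
  have key (n : ℕ) : ∀ f : ℝ → ℂ, IsSchwartz f → f.Even →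
      ∃ C : ℝ, ∀ v : ℝ, (v ^ 2) ^ n * ‖hankel m f v‖ ≤ C := by
    induction n with
    | zero => exact fun f hf _ => ⟨_, fun v => by simpa using norm_hankel_le hm hf v⟩
    | succ n ih =>
      intro f hf he
      obtain ⟨g, hg, hge, hfg⟩ := hf.exists_deriv_eq_id_mul he
      obtain ⟨h, hh, hhe, hgh⟩ := hg.exists_deriv_eq_id_mul hge
      obtain ⟨C, hC⟩ := ih (fun u => (2 * m + 2) * g u + (u : ℂ) ^ 2 * h u)
        ((hg.const_mul _).add (hh.pow_mul 2)) fun u => by simp [hge u, hhe u]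
      refine ⟨C, fun v => ?_⟩
      have h1 := congrArg norm (sq_mul_hankel hm hf hg hh hfg hgh v)
      rw [norm_neg, norm_mul, norm_pow, Complex.norm_real, Real.norm_eq_abs, sq_abs] at h1
      rw [pow_succ, mul_assoc, h1]
      exact hC v
  intro k
  obtain ⟨B, hB⟩ := key 0 f hf he
  obtain ⟨C, hC⟩ := key k f hf he
  refine ⟨B + C, fun v => ?_⟩
  have h1 : |v| ^ k ≤ (v ^ 2) ^ 0 + (v ^ 2) ^ k := by
    rw [pow_zero, ← sq_abs, ← pow_mul, mul_comm 2 k, pow_mul (|v|) k 2]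
    nlinarith [sq_nonneg (|v| ^ k - 1)]
  calc |v| ^ k * ‖hankel m f v‖ ≤ ((v ^ 2) ^ 0 + (v ^ 2) ^ k) * ‖hankel m f v‖ := by gcongr
    _ ≤ B + C := by rw [add_mul]; exact add_le_add (hB v) (hC v)

theorem IsSchwartz.hankel (hm : -(1 / 2 : ℝ) < m) (hf : IsSchwartz f) (he : f.Even) :
    IsSchwartz (hankel m f) := by
  have hmn (n : ℕ) : -(1 / 2 : ℝ) < m + n := by
    have : (0 : ℝ) ≤ n := n.cast_nonneg
    linarith
  have := isSchwartz_of_hasDerivAt_neg_mul (G := fun n => _root_.hankel (m + n) f)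
    (fun n x => ?_) fun n => rapidDecay_hankel (hmn n) hf he
  · simpa using this
  · have := hasDerivAt_hankel (hmn n) hf x
    rw [add_assoc] at this
    exact_mod_cast this

/-- The standard Gaussian. -/
noncomputable def gaussian (x : ℝ) : ℂ := (Real.exp (-(1 / 2) * x ^ 2) : ℝ)

theorem gaussian_even : gaussian.Even := fun x => by simp [gaussian]

theorem hasDerivAt_gaussian (x : ℝ) : HasDerivAt gaussian (-(x : ℂ) * gaussian x) x := by
  have h : HasDerivAt (fun x : ℝ => -(1 / 2) * x ^ 2) (-x) x := by
    refine ((hasDerivAt_pow 2 x).const_mul _).congr_deriv ?_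
    simp
  refine h.exp.ofReal_comp.congr_deriv ?_
  simp only [gaussian]
  push_cast
  ring

theorem isSchwartz_gaussian : IsSchwartz gaussian := by
  refine isSchwartz_of_hasDerivAt_neg_mul (G := fun _ => gaussian)
    (fun _ => hasDerivAt_gaussian) fun _ k => ?_
  refine ⟨(2 : ℝ) ^ k * k.factorial + 1, fun x => ?_⟩
  rw [gaussian, Complex.norm_real, Real.norm_of_nonneg (Real.exp_nonneg _)]
  have h1 := Real.pow_div_factorial_le_exp (1 / 2 * x ^ 2) (by positivity) k
  have hf : (0 : ℝ) < k.factorial := by exact_mod_cast k.factorial_pos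
  have h2 : |x| ^ k ≤ 1 + (x ^ 2) ^ k := by
    rw [← sq_abs, ← pow_mul, mul_comm 2 k, pow_mul (|x|) k 2]
    nlinarith [sq_nonneg (|x| ^ k - 1)]
  have h3 : (x ^ 2) ^ k ≤ (2 : ℝ) ^ k * k.factorial * Real.exp (1 / 2 * x ^ 2) := by
    rw [mul_pow, div_le_iff₀ hf, one_div, inv_pow] at h1
    calc (x ^ 2) ^ k = 2 ^ k * ((2 ^ k)⁻¹ * (x ^ 2) ^ k) := by field_simp
      _ ≤ 2 ^ k * (Real.exp (1 / 2 * x ^ 2) * k.factorial) := by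
        exact mul_le_mul_of_nonneg_left (by simpa using h1) (by positivity)
      _ = _ := by ring
  have h4 : Real.exp (1 / 2 * x ^ 2) * Real.exp (-(1 / 2) * x ^ 2) = 1 := by
    rw [← Real.exp_add]; simp
  have h5 : Real.exp (-(1 / 2) * x ^ 2) ≤ 1 := Real.exp_le_one_iff.2 (by nlinarith [sq_nonneg x])
  calc _ ≤ (1 + (2 : ℝ) ^ k * k.factorial * Real.exp (1 / 2 * x ^ 2)) *
        Real.exp (-(1 / 2) * x ^ 2) := by gcongr; linarith
    _ ≤ _ := by linear_combination h5 + ((2 : ℝ) ^ k * k.factorial) * h4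

theorem hankel_gaussian_zero (hm : -(1 / 2 : ℝ) < m) : hankel m gaussian 0 = 1 := by
  have hG : Real.Gamma (m + 1) ≠ 0 := (Real.Gamma_pos_of_pos (by linarith)).ne'
  have h1 := integral_comp_abs (f := fun u : ℝ => u ^ (2 * m + 1) * Real.exp (-(1 / 2) * u ^ (2 : ℝ)))
  rw [integral_rpow_mul_exp_neg_mul_rpow two_pos (by linarith) (by norm_num)] at h1
  simp only [hankel, gaussian, mul_zero, nbessel_zero hm, one_mul, ← Complex.ofReal_mul]
  rw [integral_complex_ofReal, ← Complex.ofReal_mul, Complex.ofReal_eq_one]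
  simp only [Real.rpow_two, sq_abs] at h1
  rw [h1, hankelConst, show (2 * m + 1 + 1) / 2 = m + 1 by ring,
    show -(2 * m + 1 + 1) / 2 = -(m + 1) by ring, one_div (2 : ℝ), Real.inv_rpow two_pos.le,
    Real.rpow_neg two_pos.le]
  have : (2 : ℝ) ^ (m + 1) ≠ 0 := by positivity
  field_simp

theorem hankel_gaussian (hm : -(1 / 2 : ℝ) < m) (v : ℝ) : hankel m gaussian v = gaussian v := by
  have hsucc (v : ℝ) : hankel (m + 1) gaussian v = hankel m gaussian v := by
    have h := hankel_succ_of_deriv_eq hm isSchwartz_gaussian (isSchwartz_gaussian.const_mul (-1))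
      (fun u => by rw [(hasDerivAt_gaussian u).deriv]; ring) v
    rw [hankel_const_mul] at h
    linear_combination -h
  have hne (x : ℝ) : gaussian x ≠ 0 := Complex.ofReal_ne_zero.2 (Real.exp_ne_zero _)
  have hd (x : ℝ) : HasDerivAt (fun x => hankel m gaussian x / gaussian x) 0 x := by
    have h1 := hasDerivAt_hankel hm isSchwartz_gaussian x
    rw [hsucc] at h1
    refine (h1.div (hasDerivAt_gaussian x) (hne x)).congr_deriv ?_
    rw [div_eq_zero_iff]
    left
    ring
  have hc := is_const_of_deriv_eq_zero (fun x => (hd x).differentiableAt)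
    (fun x => (hd x).deriv) v 0
  have h0 : gaussian 0 = 1 := by simp [gaussian]
  simp only [hankel_gaussian_zero hm, h0, div_one] at hc
  rw [div_eq_iff (hne v), one_mul] at hc
  exact hc

/-- On even Schwartz functions the Hankel transform is an involution. -/
theorem hankel_hankel (hm : -(1 / 2 : ℝ) < m) (hf : IsSchwartz f) (he : f.Even) (a : ℝ) :
    hankel m (hankel m f) a = f a := by
  have hm1 : -(1 / 2 : ℝ) < m + 1 := by linarith
  have hm2 : -(1 / 2 : ℝ) < m + 2 := by linarith
  have hne : gaussian a ≠ 0 := Complex.ofReal_ne_zero.2 (Real.exp_ne_zero _)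
  set c := f a / gaussian a
  have hs := hf.sub (isSchwartz_gaussian.const_mul c)
  have hse : Function.Even (fun x => f x - c * gaussian x) := fun x => by
    simp only [he x, gaussian_even x]
  obtain ⟨g, hg, hge, hfg⟩ := hs.exists_sq_sub_sq_mul hse (a := a) (by simp [c, hne])
  have hH0 := hg.hankel hm hge
  have hH1 := hg.hankel hm1 hge
  have hH2 := hg.hankel hm2 hge
  have hsplit : f = fun x : ℝ => (((x : ℂ) ^ 2 * g x) + (-(a : ℂ) ^ 2) * g x) + c * gaussian x := by
    funext x
    linear_combination hfg x
  have hsq := hg.pow_mul 2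
  have hHf : hankel m f = fun v : ℝ => (-1) * ((2 * m + 2) * (-1 * hankel (m + 1) g v) +
      (v : ℂ) ^ 2 * hankel (m + 2) g v) + (-(a : ℂ) ^ 2 * hankel m g v + c * gaussian v) := by
    funext v
    conv_lhs => rw [hsplit]
    rw [hankel_add hm (hsq.add (hg.const_mul _)) (isSchwartz_gaussian.const_mul c),
      hankel_add hm hsq (hg.const_mul _), hankel_const_mul, hankel_const_mul, hankel_gaussian hm,
      hankel_sq_mul hm hg]
    ring
  have hL := sq_mul_hankel hm hH0 (hH1.const_mul (-1)) hH2
    (fun u => by rw [(hasDerivAt_hankel hm hg u).deriv]; ring)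
    (fun u => by
      have := (hasDerivAt_hankel hm1 hg u).const_mul (-1)
      rw [this.deriv, show m + 1 + 1 = m + 2 by ring]
      ring) a
  rw [hHf, hankel_add hm _ ((hH0.const_mul _).add (isSchwartz_gaussian.const_mul c)),
    hankel_add hm (hH0.const_mul _) (isSchwartz_gaussian.const_mul c), hankel_const_mul,
    hankel_const_mul, hankel_const_mul, hankel_gaussian hm]
  · have hca : c * gaussian a = f a := div_mul_cancel₀ _ hne
    linear_combination hca - hL
  · exact ((((hH1.const_mul (-1)).const_mul _).add (hH2.pow_mul 2)).const_mul (-1))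

end Hankel

theorem poch_mul_Gamma {z : ℝ} (hz : 0 < z) (n : ℕ) :
    poch z n * Real.Gamma z = Real.Gamma (z + n) := by
  induction n with
  | zero => simp [poch]
  | succ n ih =>
    have hn : (0 : ℝ) ≤ n := n.cast_nonneg
    have h : Real.Gamma (z + n + 1) = (z + n) * Real.Gamma (z + n) :=
      Real.Gamma_add_one (by linarith)
    rw [Nat.cast_succ, ← add_assoc, h, ← ih, poch, poch, prod_range_succ]
    ring

theorem hankelConst_div_poch {l : ℝ} (hl : -(1 / 2 : ℝ) < l) (n : ℕ) :
    hankelConst l / (2 ^ n * poch (l + 1) n) = hankelConst (l + n) := by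
  rw [hankelConst, hankelConst, show l + n + 1 = l + 1 + n by ring,
    ← poch_mul_Gamma (by linarith) n, Real.rpow_add_natCast two_ne_zero, div_div]
  ring_nf

theorem iteratedDeriv_succ_id_mul {g : ℝ → ℂ} (hg : ContDiff ℝ ∞ g) (k : ℕ) (x : ℝ) :
    iteratedDeriv (k + 1) (fun x : ℝ => (x : ℂ) * g x) x =
      (x : ℂ) * iteratedDeriv (k + 1) g x + (k + 1) * iteratedDeriv k g x := by
  have hd (k : ℕ) (x : ℝ) : HasDerivAt (iteratedDeriv k g) (iteratedDeriv (k + 1) g x) x := by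
    rw [iteratedDeriv_succ]
    exact (hg.differentiable_iteratedDeriv k (by exact_mod_cast WithTop.coe_lt_top _) x).hasDerivAt
  have hid (x : ℝ) : HasDerivAt (fun x : ℝ => (x : ℂ)) 1 x := (hasDerivAt_id x).ofReal_comp
  induction k generalizing x with
  | zero =>
    rw [zero_add, iteratedDeriv_one]
    refine HasDerivAt.deriv ?_
    have := (hid x).mul (hd 0 x)
    rw [iteratedDeriv_zero] at this
    refine this.congr_deriv ?_
    simp
    ring
  | succ k ih =>
    rw [iteratedDeriv_succ, funext ih]
    refine HasDerivAt.deriv ?_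
    refine (((hid x).mul (hd (k + 1) x)).add ((hd k x).const_mul ((k : ℂ) + 1))).congr_deriv ?_
    push_cast
    ring

theorem iteratedDeriv_pow_mul_zero {g : ℝ → ℂ} (hg : IsSchwartz g) {n k : ℕ} (hk : k < n) :
    iteratedDeriv k (fun x : ℝ => (x : ℂ) ^ n * g x) 0 = 0 := by
  induction n generalizing k with
  | zero => omega
  | succ n ih =>
    rw [show (fun x : ℝ => (x : ℂ) ^ (n + 1) * g x) = fun x : ℝ => (x : ℂ) * ((x : ℂ) ^ n * g x) from
      funext fun x => by ring]
    rcases k with _ | k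
    · simp
    · rw [iteratedDeriv_succ_id_mul (hg.pow_mul n).contDiff, ih (k := k) (by omega)]
      simp

/-- A Schwartz function vanishing to order `n` at the origin is divisible by `x ^ n`. -/
theorem IsSchwartz.exists_pow_mul {n : ℕ} {f : ℝ → ℂ} (hf : IsSchwartz f)
    (h0 : ∀ k < n, iteratedDeriv k f 0 = 0) :
    ∃ g : ℝ → ℂ, IsSchwartz g ∧ ∀ x : ℝ, f x = (x : ℂ) ^ n * g x := by
  induction n generalizing f with
  | zero => exact ⟨f, hf, by simp⟩
  | succ n ih =>
    obtain ⟨g, hg, hfg⟩ := hf.exists_sub_mul (a := 0) (by simpa using h0 0 n.succ_pos)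
    simp only [Complex.ofReal_zero, sub_zero] at hfg
    obtain ⟨k, hk, hgk⟩ := ih hg fun k hk => by
      have := h0 (k + 1) (by omega)
      rw [show f = fun x : ℝ => (x : ℂ) * g x from funext hfg,
        iteratedDeriv_succ_id_mul hg.contDiff] at this
      have hk : (k : ℂ) + 1 ≠ 0 := by exact_mod_cast k.succ_ne_zero
      simpa [hk] using this
    exact ⟨k, hk, fun x => by rw [hfg, hgk]; ring⟩

theorem InSn.exists_eq_add {r : ℕ} {g : SchwartzMap ℝ ℂ} (hg : InSn r g) :
    ∃ a b : ℝ → ℂ, IsSchwartz a ∧ IsSchwartz b ∧ a.Even ∧ b.Even ∧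
      ∀ x : ℝ, g x = a x + (x : ℂ) ^ (2 * r + 1) * b x := by
  have hs : IsSchwartz g := ⟨g, rfl⟩
  have hodd : IsSchwartz fun x => 2⁻¹ * (g x - g (-x)) := (hs.sub hs.comp_neg).const_mul _
  obtain ⟨b, hb, hgb⟩ := hodd.exists_pow_mul (n := 2 * r + 1) fun k hk => by
    have h1 : ContDiffAt ℝ k g 0 := hs.contDiff.contDiffAt.of_le (by exact_mod_cast le_top)
    have h2 : ContDiffAt ℝ k (fun x => g (-x)) 0 :=
      hs.comp_neg.contDiff.contDiffAt.of_le (by exact_mod_cast le_top)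
    rw [iteratedDeriv_const_mul_field, iteratedDeriv_fun_sub h1 h2, iteratedDeriv_comp_neg,
      neg_zero]
    rcases Nat.even_or_odd' k with ⟨s, rfl | rfl⟩
    · simp
    · rw [hg s (by omega)]
      simp
  refine ⟨_, _, hs.evenPart, hb.evenPart, fun x => by simp [add_comm],
    fun x => by simp [add_comm], fun x => ?_⟩
  have h1 := hgb x
  have h2 := hgb (-x)
  rw [neg_neg, Complex.ofReal_neg, Odd.neg_pow ⟨r, rfl⟩] at h2
  linear_combination (h1 - h2) / 2

theorem exists_inSn_eq_add (r : ℕ) {a b : ℝ → ℂ} (ha : IsSchwartz a) (hb : IsSchwartz b)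
    (he : a.Even) :
    ∃ g : SchwartzMap ℝ ℂ, InSn r g ∧ ∀ x : ℝ, g x = a x + (x : ℂ) ^ (2 * r + 1) * b x := by
  obtain ⟨g, hg⟩ := ha.add (hb.pow_mul (2 * r + 1))
  refine ⟨g, fun s hs => ?_, fun x => congrFun hg x⟩
  have hle (k : ℕ) : (k : WithTop ℕ∞) ≤ ∞ := by exact_mod_cast le_top
  have h1 : ContDiffAt ℝ (2 * s + 1 : ℕ) a 0 := ha.contDiff.contDiffAt.of_le (hle _)
  have h2 : ContDiffAt ℝ (2 * s + 1 : ℕ) (fun x : ℝ => (x : ℂ) ^ (2 * r + 1) * b x) 0 :=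
    (hb.pow_mul _).contDiff.contDiffAt.of_le (hle _)
  have h3 := iteratedDeriv_comp_neg (2 * s + 1) a 0
  rw [show (fun x => a (-x)) = a from funext he, neg_zero, Odd.neg_one_pow ⟨s, rfl⟩, neg_smul,
    one_smul] at h3
  rw [hg, iteratedDeriv_fun_add h1 h2, self_eq_neg.1 h3, iteratedDeriv_pow_mul_zero hb (by omega),
    add_zero]

/-- The transform acts by Hankel transforms of orders `l` and `l + 2r + 1` on the two parity
components. -/
theorem Ftrans_eq_hankel (r : ℕ) {l : ℝ} (hl : -(1 / 2 : ℝ) < l) {a b : ℝ → ℂ} (ha : IsSchwartz a)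
    (hb : IsSchwartz b) (hae : a.Even) (hbe : b.Even) (v : ℝ) :
    Ftrans r l (fun x => a x + (x : ℂ) ^ (2 * r + 1) * b x) v =
      hankel l a v + (v : ℂ) ^ (2 * r + 1) *
        (Complex.I * (-1) ^ (r + 1) * hankel (l + (2 * r + 1)) b v) := by
  set n := 2 * r + 1 with hn
  have hnodd : Odd n := ⟨r, rfl⟩
  have hc : (2 * r + 1 : ℝ) = n := by rw [hn]; push_cast; ring
  have hn0 : (0 : ℝ) ≤ n := n.cast_nonneg
  have hln : -(1 / 2 : ℝ) < l + n := by linarith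
  have hw (u : ℝ) : |u| ^ (2 * (l + n) + 1) = |u| ^ (2 * l + 1) * (u ^ n) ^ 2 := by
    rw [← abs_rpow_add_two_mul (by linarith)]
    ring_nf
  set κ : ℂ := Complex.I * (-1) ^ (r + 1) * ((v ^ n / (2 ^ n * poch (l + 1) n) : ℝ) : ℂ) with hκ
  have hφ : Continuous fun u : ℝ => nbessel (l + n) (u * v) :=
    (continuous_nbessel hln).comp (continuous_mul_const v)
  have hI1 := integrable_hankel hl (ha.add (hb.pow_mul n)) v
  have hI2 := (ha.pow_mul n).integrable_kernel (p := 2 * l + 1) (by linarith) hφ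
    fun _ => abs_nbessel_le_one hln _
  have hI3 := integrable_hankel hln hb v
  have hodd : (∫ u : ℝ, ((nbessel (l + n) (u * v) * |u| ^ (2 * l + 1) : ℝ) : ℂ) *
      ((u : ℂ) ^ n * a u)) = 0 := by
    have h := integral_neg_eq_self (fun u : ℝ =>
      ((nbessel (l + n) (u * v) * |u| ^ (2 * l + 1) : ℝ) : ℂ) * ((u : ℂ) ^ n * a u)) volume
    simp only [neg_mul, nbessel_neg, abs_neg, hae _, Complex.ofReal_neg, hnodd.neg_pow, mul_neg,
      integral_neg] at h
    exact self_eq_neg.1 h.symm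
  have hsplit (u : ℝ) : e2r1 r l (u * v) * (a u + (u : ℂ) ^ n * b u) *
      ((|u| ^ (2 * l + 1) : ℝ) : ℂ) =
      ((nbessel l (u * v) * |u| ^ (2 * l + 1) : ℝ) : ℂ) * (a u + (u : ℂ) ^ n * b u) +
      κ * (((nbessel (l + n) (u * v) * |u| ^ (2 * l + 1) : ℝ) : ℂ) * ((u : ℂ) ^ n * a u) +
        ((nbessel (l + n) (u * v) * |u| ^ (2 * (l + n) + 1) : ℝ) : ℂ) * b u) := by
    rw [e2r1, ← hn, hc, hw, hκ, mul_pow]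
    push_cast
    ring
  have hH : hankel l (fun u => a u + (u : ℂ) ^ n * b u) v = hankel l a v := by
    have hz : hankel l (fun u : ℝ => (u : ℂ) ^ n * b u) v = 0 := hankel_eq_zero_of_odd
      (fun u => by simp only [hbe u, Complex.ofReal_neg, hnodd.neg_pow, neg_mul]) v
    rw [hankel_add hl ha (hb.pow_mul n), hz, add_zero]
  have hI23 : Integrable fun u : ℝ =>
      ((nbessel (l + n) (u * v) * |u| ^ (2 * l + 1) : ℝ) : ℂ) * ((u : ℂ) ^ n * a u) +
        ((nbessel (l + n) (u * v) * |u| ^ (2 * (l + n) + 1) : ℝ) : ℂ) * b u := hI2.add hI3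
  rw [Ftrans, integral_congr_ae (Filter.Eventually.of_forall hsplit),
    integral_add hI1 (hI23.const_mul κ), integral_const_mul, integral_add hI2 hI3, hodd,
    zero_add, mul_add, ← hH, hc, hankel, hankel, ← hankelConst_div_poch hl, hκ, hankelConst]
  push_cast
  ring
/-- the transform F_r^lambda maps S_r(ℝ) onto S_r(ℝ). -/
theorem stmt19 (r : ℕ) (l : ℝ) (hl : -(1 / 2 : ℝ) < l) :
    (∀ g : SchwartzMap ℝ ℂ, InSn r g →
      ∃ h : SchwartzMap ℝ ℂ, InSn r h ∧ ∀ v : ℝ, Ftrans r l (⇑g) v = h v) ∧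
    (∀ h : SchwartzMap ℝ ℂ, InSn r h →
      ∃ g : SchwartzMap ℝ ℂ, InSn r g ∧ ∀ v : ℝ, Ftrans r l (⇑g) v = h v) := by
  set κ : ℂ := Complex.I * (-1) ^ (r + 1) with hκ
  have hκ2 : κ * κ = -1 := by
    rw [hκ, mul_mul_mul_comm, Complex.I_mul_I, ← mul_pow]
    simp
  have hr : (0 : ℝ) ≤ r := r.cast_nonneg
  have hl' : -(1 / 2 : ℝ) < l + (2 * r + 1) := by linarith
  constructor
  · intro g hg
    obtain ⟨a, b, ha, hb, hae, hbe, hgab⟩ := hg.exists_eq_add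
    obtain ⟨h, hh, hhe⟩ := exists_inSn_eq_add r (ha.hankel hl hae)
      ((hb.hankel hl' hbe).const_mul κ) (hankel_even _ _)
    refine ⟨h, hh, fun v => ?_⟩
    rw [funext hgab, Ftrans_eq_hankel r hl ha hb hae hbe, hhe]
  · intro h hh
    obtain ⟨a, b, ha, hb, hae, hbe, hhab⟩ := hh.exists_eq_add
    have hb' := (hb.hankel hl' hbe).const_mul (-κ)
    obtain ⟨g, hg, hge⟩ := exists_inSn_eq_add r (ha.hankel hl hae) hb' (hankel_even _ _)
    refine ⟨g, hg, fun v => ?_⟩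
    rw [funext hge, Ftrans_eq_hankel r hl (ha.hankel hl hae) hb' (hankel_even _ _)
      (fun u => by rw [hankel_even]), hankel_const_mul, hankel_hankel hl ha hae,
      hankel_hankel hl' hb hbe, hhab]
    linear_combination -((v : ℂ) ^ (2 * r + 1) * b v) * hκ2
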